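/- arXiv:1607.04130 — 2 statements merged into one kernel-verified Lean document; each statement's English description precedes it below -/
import Mathlib

section
/- For p > 2, the first positive eigenvalue of the p-Laplacian of the complete graph K_m on m ≥ 2 vertices equals (m - 2 + 2^{p-1})/(m - 1). -/
open Finset

/-- The valency (degree) of a vertex `u` in the multigraph with edge set `E`,
each edge `e` having endpoints `(ends e).1` and `(ends e).2`. -/
def graphVal {V E : Type} [Fintype E] [DecidableEq V] (ends : E → V × V) (u : V) : ℕ :=
  ∑ e : E, ((if (ends e).1 = u then 1 else 0) + (if (ends e).2 = u then 1 else 0))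

/-- The p-energy ‖dx‖_p^p = Σ_e |x(e_+) - x(e_-)|^p of a function on the vertices. -/
noncomputable def graphEnergy {V E : Type} [Fintype E] (p : ℝ) (ends : E → V × V)
    (x : V → ℝ) : ℝ :=
  ∑ e : E, |x (ends e).2 - x (ends e).1| ^ p

/-- inf_{c ∈ ℝ} Σ_u |x_u - c|^p · val(u). -/
noncomputable def graphDenom {V E : Type} [Fintype V] [Fintype E] [DecidableEq V]
    (p : ℝ) (ends : E → V × V) (x : V → ℝ) : ℝ :=
  sInf {t : ℝ | ∃ c : ℝ, t = ∑ u : V, |x u - c| ^ p * (graphVal ends u : ℝ)}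

/-- λ_{1,p}: the first positive eigenvalue of the graph p-Laplacian, via the
Rayleigh quotient characterisation: infimum over non-constant `x` of
energy/denominator. -/
noncomputable def lambda1 {V E : Type} [Fintype V] [Fintype E] [DecidableEq V]
    (p : ℝ) (ends : E → V × V) : ℝ :=
  sInf {r : ℝ | ∃ x : V → ℝ, (∃ u v : V, x u ≠ x v) ∧
    r = graphEnergy p ends x / graphDenom p ends x}

/-- Adjacency relation of the multigraph. -/
def graphAdj {V E : Type} (ends : E → V × V) (u v : V) : Prop :=
  ∃ e : E, ends e = (u, v) ∨ ends e = (v, u)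

/-- Connectivity of the multigraph. -/
def graphConnected {V E : Type} (ends : E → V × V) : Prop :=
  ∀ u v : V, Relation.ReflTransGen (graphAdj ends) u v


namespace KmAux

/-- Sum over edges of the complete graph versus sum over ordered pairs. -/
lemma pairs {M : Type} [AddCommMonoid M] (m : ℕ) (f : Fin m → Fin m → M) :
    (∑ e : {e : Fin m × Fin m // e.1 < e.2}, (f e.val.1 e.val.2 + f e.val.2 e.val.1))
      + ∑ i, f i i = ∑ i, ∑ j, f i j := by
  have h1 : ∀ g : Fin m → Fin m → M, (∑ e : {e : Fin m × Fin m // e.1 < e.2}, g e.val.1 e.val.2)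
      = ∑ i, ∑ j, if i < j then g i j else 0 := by
    intro g
    rw [← Finset.sum_product' (s := univ) (t := univ) (f := fun i j => if i < j then g i j else 0)]
    rw [Finset.univ_product_univ, ← Finset.sum_filter]
    symm
    exact Finset.sum_subtype (univ.filter (fun z : Fin m × Fin m => z.1 < z.2)) (by simp)
      (fun z : Fin m × Fin m => g z.1 z.2)
  rw [Finset.sum_add_distrib, h1 f, h1 (fun i j => f j i),
    Finset.sum_comm (f := fun i j => if i < j then f j i else 0)]
  have h2 : ∀ i, f i i = ∑ j, if i = j then f i j else 0 := by intro i; simp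
  rw [Finset.sum_congr rfl (fun i _ => h2 i), ← Finset.sum_add_distrib, ← Finset.sum_add_distrib]
  refine Finset.sum_congr rfl (fun i _ => ?_)
  rw [← Finset.sum_add_distrib, ← Finset.sum_add_distrib]
  refine Finset.sum_congr rfl (fun j _ => ?_)
  rcases lt_trichotomy i j with h | h | h
  · simp [h, h.not_gt, h.ne]
  · simp [h]
  · simp [h, h.not_gt, h.ne']

lemma val_eq (m : ℕ) (u : Fin m) :
    graphVal (fun e : {e : Fin m × Fin m // e.1 < e.2} => e.val) u + 1 = m := by
  have := pairs m (fun i _ : Fin m => if i = u then 1 else 0)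
  simp only [Finset.sum_ite_eq', Finset.mem_univ, if_true, Finset.sum_const, Finset.card_univ,
    Fintype.card_fin] at this
  unfold graphVal
  rw [this]
  simp

lemma energy_eq (m : ℕ) (p : ℝ) (hp : 2 < p) (x : Fin m → ℝ) :
    2 * graphEnergy p (fun e : {e : Fin m × Fin m // e.1 < e.2} => e.val) x
      = ∑ i, ∑ j, |x i - x j| ^ p := by
  have := pairs m (fun i j : Fin m => |x i - x j| ^ p)
  rw [← this]
  have h0 : (0:ℝ) ^ p = 0 := Real.zero_rpow (by linarith)
  simp only [sub_self, abs_zero, h0, Finset.sum_const_zero, add_zero, graphEnergy]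
  rw [Finset.mul_sum]
  refine Finset.sum_congr rfl (fun e _ => ?_)
  rw [abs_sub_comm (x e.val.2) (x e.val.1)]
  ring

/-- derivative of `|t|^p / p`. -/
noncomputable def ph (p t : ℝ) : ℝ := |t| ^ (p - 2) * t

lemma ph_mul (p : ℝ) (hp : 1 < p) (t : ℝ) : ph p t * t = |t| ^ p := by
  unfold ph
  rcases eq_or_ne t 0 with rfl | h
  · simp [Real.zero_rpow (by linarith : p ≠ 0)]
  · have h' : 0 < |t| := abs_pos.mpr h
    rw [mul_assoc, ← abs_mul_abs_self t, ← mul_assoc, ← Real.rpow_add_one h'.ne',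
      ← Real.rpow_add_one h'.ne']
    congr 1; ring

lemma ph_nonneg (p t : ℝ) (ht : 0 ≤ t) : 0 ≤ ph p t := by
  unfold ph; positivity

lemma ph_pos (p t : ℝ) (ht : 0 < t) : 0 < ph p t := by
  unfold ph; positivity

lemma ph_neg (p t : ℝ) : ph p (-t) = - ph p t := by
  unfold ph; rw [abs_neg]; ring

lemma ph_zero (p : ℝ) : ph p 0 = 0 := by
  simp [ph]

lemma ph_of_nonneg (p t : ℝ) (hp : 1 < p) (ht : 0 ≤ t) : ph p t = t ^ (p - 1) := by
  unfold ph
  rcases ht.eq_or_lt with rfl | h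
  · simp [Real.zero_rpow (by linarith : p - 1 ≠ 0)]
  · rw [abs_of_pos h, ← Real.rpow_add_one h.ne']
    congr 1; ring

lemma ph_hom (p s t : ℝ) (hs : 0 < s) : ph p (s * t) = s ^ (p - 1) * ph p t := by
  unfold ph
  rw [abs_mul, abs_of_pos hs, Real.mul_rpow hs.le (abs_nonneg t)]
  have : s ^ (p - 1) = s ^ (p - 2) * s := by
    rw [← Real.rpow_add_one hs.ne']; congr 1; ring
  rw [this]; ring

lemma ph_cont (p : ℝ) (hp : 2 < p) : Continuous (ph p) := by
  unfold ph
  exact (continuous_abs.rpow_const (fun _ => Or.inr (by linarith))).mul continuous_id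

lemma abs_ph (p t : ℝ) (hp : 1 < p) : |ph p t| = |t| ^ (p - 1) := by
  rw [← ph_of_nonneg p |t| hp (abs_nonneg t)]
  unfold ph
  rw [abs_mul, abs_abs, abs_of_nonneg (by positivity : 0 ≤ |t| ^ (p - 2))]

/-- tangent inequality -/
lemma tangent (p : ℝ) (hp : 1 < p) (a b : ℝ) :
    |a| ^ p + p * ph p a * (b - a) ≤ |b| ^ p := by
  have hc : (p / (p - 1)).HolderConjugate p := (Real.HolderConjugate.conjExponent hp).symm
  have hy := Real.young_inequality (ph p a) b hc
  rw [abs_ph p a hp, ← Real.rpow_mul (abs_nonneg a)] at hy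
  have hp1 : p - 1 ≠ 0 := by linarith
  rw [show (p - 1) * (p / (p - 1)) = p by field_simp] at hy
  have hm := ph_mul p hp a
  have h2 : p * (ph p a * b) ≤ p * (|a| ^ p / (p / (p - 1)) + |b| ^ p / p) :=
    mul_le_mul_of_nonneg_left hy (by linarith)
  have h3 : p * (|a| ^ p / (p / (p - 1)) + |b| ^ p / p) = (p - 1) * |a| ^ p + |b| ^ p := by
    field_simp
  rw [h3] at h2
  have h4 : p * ph p a * (b - a) = p * (ph p a * b) - p * (ph p a * a) := by ring
  rw [h4, hm]
  linarith

/-- tangent inequality for sums -/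
lemma tangent_sum {m : ℕ} (p : ℝ) (hp : 1 < p) (x y : Fin m → ℝ) :
    ∑ u, |x u| ^ p + p * ∑ u, ph p (x u) * (y u - x u) ≤ ∑ u, |y u| ^ p := by
  rw [Finset.mul_sum, ← Finset.sum_add_distrib]
  refine Finset.sum_le_sum (fun u _ => ?_)
  have := tangent p hp (x u) (y u)
  linarith

lemma denom_eq (m : ℕ) (p : ℝ) (hp : 2 < p) (x : Fin m → ℝ) (c : ℝ)
    (hc : ∑ u, ph p (x u - c) = 0) :
    graphDenom p (fun e : {e : Fin m × Fin m // e.1 < e.2} => e.val) x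
      = ((m:ℝ) - 1) * ∑ u, |x u - c| ^ p := by
  have hv : ∀ u : Fin m,
      (graphVal (fun e : {e : Fin m × Fin m // e.1 < e.2} => e.val) u : ℝ) = (m:ℝ) - 1 := by
    intro u
    have := val_eq m u
    have h2 : (graphVal (fun e : {e : Fin m × Fin m // e.1 < e.2} => e.val) u : ℝ) + 1 = (m:ℝ) := by
      exact_mod_cast this
    linarith
  unfold graphDenom
  apply IsLeast.csInf_eq
  constructor
  · refine ⟨c, ?_⟩
    rw [Finset.mul_sum]
    refine Finset.sum_congr rfl (fun u _ => ?_)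
    rw [hv]; ring
  · rintro t ⟨d, rfl⟩
    rcases Nat.eq_zero_or_pos m with h0 | h0
    · subst h0; simp
    have hm1 : (0:ℝ) ≤ (m:ℝ) - 1 := by
      have : (1:ℝ) ≤ m := by exact_mod_cast h0
      linarith
    have h1 : ∑ u, |x u - d| ^ p
        * (graphVal (fun e : {e : Fin m × Fin m // e.1 < e.2} => e.val) u : ℝ)
        = ((m:ℝ) - 1) * ∑ u, |x u - d| ^ p := by
      rw [Finset.mul_sum]
      refine Finset.sum_congr rfl (fun u _ => ?_)
      rw [hv]; ring
    rw [h1]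
    refine mul_le_mul_of_nonneg_left ?_ hm1
    have := tangent_sum p (by linarith) (fun u => x u - c) (fun u => x u - d)
    have h2 : ∑ u, ph p (x u - c) * ((x u - d) - (x u - c)) = 0 := by
      have : ∀ u, ph p (x u - c) * ((x u - d) - (x u - c)) = ph p (x u - c) * (c - d) := by
        intro u; ring
      simp only [this]
      rw [← Finset.sum_mul, hc, zero_mul]
    simp only [h2] at this
    linarith

/-- existence of the optimal constant -/
lemma exists_c (m : ℕ) (hm : 2 ≤ m) (p : ℝ) (hp : 2 < p) (x : Fin m → ℝ) :
    ∃ c, ∑ u, ph p (x u - c) = 0 := by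
  have : Nonempty (Fin m) := ⟨⟨0, by omega⟩⟩
  obtain ⟨M, hM⟩ := Finite.exists_max x
  obtain ⟨n, hn⟩ := Finite.exists_min x
  have hcont : Continuous (fun c => ∑ u, ph p (x u - c)) := by
    refine continuous_finsetSum _ (fun u _ => ?_)
    exact (ph_cont p hp).comp (continuous_const.sub continuous_id)
  have h := intermediate_value_Icc' (hn M) hcont.continuousOn
  have h0 : (0:ℝ) ∈ Set.Icc (∑ u, ph p (x u - x M)) (∑ u, ph p (x u - x n)) := by
    constructor
    · refine Finset.sum_nonpos (fun u _ => ?_)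
      have := ph_nonneg p (x M - x u) (by linarith [hM u])
      rw [← neg_sub, ph_neg]; linarith
    · exact Finset.sum_nonneg (fun u _ => ph_nonneg p _ (by linarith [hn u]))
  obtain ⟨c, _, hc⟩ := h h0
  exact ⟨c, hc⟩

/-- double energy -/
noncomputable def E2 (m : ℕ) (p : ℝ) (x : Fin m → ℝ) : ℝ := ∑ i, ∑ j, |x i - x j| ^ p

lemma sum_two (m : ℕ) (u v : Fin m) (huv : u ≠ v) (f : Fin m → ℝ) (K : ℝ)
    (hK : ∀ j, j ≠ u → j ≠ v → K ≤ f j) :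
    f u + f v + ((m:ℝ) - 2) * K ≤ ∑ j, f j := by
  have h1 : ∑ j, (f j - K) = ∑ j, f j - m * K := by
    rw [Finset.sum_sub_distrib]; simp
  have h2 : ∑ j ∈ ({u, v} : Finset (Fin m)), (f j - K) ≤ ∑ j, (f j - K) := by
    refine Finset.sum_le_sum_of_subset_of_nonneg (Finset.subset_univ _) ?_
    intro j _ hj
    simp only [Finset.mem_insert, Finset.mem_singleton, not_or] at hj
    linarith [hK j hj.1 hj.2]
  rw [h1, Finset.sum_pair huv] at h2
  linarith

lemma sum_two_eq (m : ℕ) (u v : Fin m) (huv : u ≠ v) (f : Fin m → ℝ) (K : ℝ)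
    (hK : ∀ j, j ≠ u → j ≠ v → f j = K) :
    ∑ j, f j = f u + f v + ((m:ℝ) - 2) * K := by
  have h1 := sum_two m u v huv f K (fun j a b => (hK j a b).ge)
  have h2 := sum_two m u v huv (fun j => - f j) (-K) (fun j a b => by simp [hK j a b])
  rw [Finset.sum_neg_distrib] at h2
  linarith

/-- The key inequality, from the eigenvalue equation at the max and the min. -/
lemma key (m : ℕ) (p : ℝ) (hp : 2 < p) (μ : ℝ) (x : Fin m → ℝ)
    (hx : ∑ u, ph p (x u) = 0) (hx0 : ∃ u, x u ≠ 0)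
    (heig : ∀ i, ∑ j, ph p (x i - x j) = μ * ph p (x i)) :
    (m:ℝ) - 2 + 2 ^ (p - 1) ≤ μ := by
  obtain ⟨u0, hu0⟩ := hx0
  have : Nonempty (Fin m) := ⟨u0⟩
  obtain ⟨M, hM⟩ := Finite.exists_max x
  obtain ⟨n, hn⟩ := Finite.exists_min x
  have ha : 0 < x M := by
    by_contra hcon
    push Not at hcon
    have h1 : ∑ u, ph p (x u) < 0 := by
      refine Finset.sum_neg' (fun u _ => ?_) ⟨u0, Finset.mem_univ _, ?_⟩
      · have := ph_nonneg p (- x u) (by linarith [hM u])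
        rw [ph_neg] at this; linarith
      · have := ph_pos p (- x u0) (by
          have := lt_of_le_of_ne ((hM u0).trans hcon) hu0
          linarith)
        rw [ph_neg] at this; linarith
    linarith
  have hb' : x n < 0 := by
    by_contra hcon
    push Not at hcon
    have h1 : 0 < ∑ u, ph p (x u) := by
      refine Finset.sum_pos' (fun u _ => ?_) ⟨u0, Finset.mem_univ _, ?_⟩
      · exact ph_nonneg p (x u) (by linarith [hn u])
      · exact ph_pos p (x u0) (lt_of_le_of_ne (hcon.trans (hn u0)) hu0.symm)
    linarith
  have hMn : M ≠ n := by
    rintro rfl; linarith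
  obtain ⟨a, haM⟩ : ∃ a, a = x M := ⟨_, rfl⟩
  obtain ⟨b, hbn⟩ : ∃ b, b = - x n := ⟨_, rfl⟩
  have hxn : x n = -b := by linarith
  have ha0 : 0 < a := by linarith
  have hb0 : 0 < b := by linarith
  obtain ⟨q, hq⟩ : ∃ q, q = p - 1 := ⟨_, rfl⟩
  have hq1 : 1 < q := by linarith
  have e1 : ∑ j, (a - x j) ^ q = μ * a ^ q := by
    have := heig M
    rw [ph_of_nonneg p _ (by linarith) ha.le, ← haM, ← hq] at this
    rw [← this]
    refine Finset.sum_congr rfl (fun j _ => ?_)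
    rw [ph_of_nonneg p _ (by linarith) (by linarith [hM j]), hq]
  have e2 : ∑ j, (x j + b) ^ q = μ * b ^ q := by
    have := heig n
    rw [hxn, ph_neg, ph_of_nonneg p b (by linarith) hb0.le, ← hq] at this
    have h3 : ∑ j, ph p (-b - x j) = - ∑ j, (x j + b) ^ q := by
      rw [← Finset.sum_neg_distrib]
      refine Finset.sum_congr rfl (fun j _ => ?_)
      rw [show -b - x j = -(x j + b) by ring, ph_neg,
        ph_of_nonneg p _ (by linarith) (by linarith [hn j]), hq]
    rw [h3] at this
    linarith
  obtain ⟨A, hA⟩ : ∃ A, A = a ^ (q - 1) := ⟨_, rfl⟩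
  obtain ⟨B, hB⟩ : ∃ B, B = b ^ (q - 1) := ⟨_, rfl⟩
  have hA0 : 0 < A := by rw [hA]; positivity
  have hB0 : 0 < B := by rw [hB]; positivity
  have hAa : a ^ q = A * a := by
    rw [hA, ← Real.rpow_add_one ha0.ne']; congr 1; ring
  have hBb : b ^ q = B * b := by
    rw [hB, ← Real.rpow_add_one hb0.ne']; congr 1; ring
  have hsum : ∑ j, (B * (a - x j) ^ q + A * (x j + b) ^ q) = μ * (A * B * (a + b)) := by
    rw [Finset.sum_add_distrib, ← Finset.mul_sum, ← Finset.mul_sum, e1, e2, hAa, hBb]; ring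
  have hrest : ∀ j, j ≠ M → j ≠ n →
      A * B * (a + b) ≤ B * (a - x j) ^ q + A * (x j + b) ^ q := by
    intro j _ _
    have t1 := tangent q hq1 a (a - x j)
    have t2 := tangent q hq1 b (x j + b)
    rw [abs_of_pos ha0, abs_of_nonneg (by linarith [hM j] : 0 ≤ a - x j),
      ph_of_nonneg q a hq1 ha0.le, hAa, ← hA] at t1
    rw [abs_of_pos hb0, abs_of_nonneg (by linarith [hn j] : 0 ≤ x j + b),
      ph_of_nonneg q b hq1 hb0.le, hBb, ← hB] at t2
    have t1' := mul_le_mul_of_nonneg_left t1 hB0.le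
    have t2' := mul_le_mul_of_nonneg_left t2 hA0.le
    have : A * B * (a + b) = B * (A * a + q * A * (a - x j - a))
        + A * (B * b + q * B * (x j + b - b)) := by ring
    linarith
  have h2 := sum_two m M n hMn _ _ hrest
  rw [hsum, ← haM, hxn] at h2
  have hz : (0:ℝ) ^ q = 0 := Real.zero_rpow (by linarith)
  simp only [sub_self, neg_add_cancel, hz, mul_zero, zero_add, add_zero, sub_neg_eq_add] at h2
  -- AM-GM
  have hamgm : 2 ^ q * (A * B) * (a + b) ≤ (A + B) * (a + b) ^ q := by
    obtain ⟨r, hr⟩ : ∃ r, r = q - 1 := ⟨_, rfl⟩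
    have hab : (a + b) ^ q = (a + b) ^ r * (a + b) := by
      rw [← Real.rpow_add_one (by positivity : a + b ≠ 0)]; congr 1; linarith
    have h2q : (2:ℝ) ^ q = 2 ^ r * 2 := by
      rw [← Real.rpow_add_one (by norm_num : (2:ℝ) ≠ 0)]; congr 1; linarith
    rw [hab, h2q, ← mul_assoc (A + B)]
    refine mul_le_mul_of_nonneg_right ?_ (by positivity : 0 ≤ a + b)
    have hr0 : 0 ≤ r := by linarith
    have s1 : (4 * (a * b)) ^ r ≤ ((a + b) * (a + b)) ^ r :=
      Real.rpow_le_rpow (by positivity) (by nlinarith [sq_nonneg (a - b)]) hr0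
    have s2 : (4 * (a * b)) ^ r = 2 ^ r * 2 ^ r * (A * B) := by
      rw [hA, hB, ← hr, Real.mul_rpow (by norm_num : (0:ℝ) ≤ 4) (by positivity),
        Real.mul_rpow ha0.le hb0.le, ← Real.mul_rpow (by norm_num : (0:ℝ) ≤ 2) (by norm_num : (0:ℝ) ≤ 2)]
      norm_num
    rw [s2, Real.mul_rpow (by positivity) (by positivity)] at s1
    have hT : 0 < (2:ℝ) ^ r := by positivity
    have hU : 0 < (a + b) ^ r := by positivity
    generalize (2:ℝ) ^ r = T at *
    generalize (a + b) ^ r = U at *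
    refine (sq_le_sq₀ (by positivity) (by positivity)).mp ?_
    have s3 : 4 * (A * B) ≤ (A + B) ^ 2 := by nlinarith [sq_nonneg (A - B)]
    calc (T * 2 * (A * B)) ^ 2 = (T * T * (A * B)) * (4 * (A * B)) := by ring
      _ ≤ (U * U) * (A + B) ^ 2 := mul_le_mul s1 s3 (by positivity) (by positivity)
      _ = ((A + B) * U) ^ 2 := by ring
  rw [← hq]
  have hpos : 0 < A * B * (a + b) := by positivity
  refine le_of_mul_le_mul_right ?_ hpos
  nlinarith [hamgm, h2]

/-- Euler-Lagrange equation. -/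
lemma euler (m : ℕ) (p : ℝ) (hp : 2 < p) (μ : ℝ) (hμ : 0 ≤ μ) (x : Fin m → ℝ)
    (hx : ∑ u, ph p (x u) = 0)
    (hmin : ∀ y : Fin m → ℝ, ∃ c, 2 * μ * ∑ u, |y u - c| ^ p ≤ E2 m p y)
    (hE : E2 m p x = 2 * μ * ∑ u, |x u| ^ p) (i : Fin m) :
    ∑ j, ph p (x i - x j) = μ * ph p (x i) := by
  obtain ⟨w, hw⟩ : ∃ w : Fin m → ℝ, w = Pi.single i 1 := ⟨_, rfl⟩
  let h : ℝ → ℝ := fun s => (∑ k, ∑ j, |(x k + s * w k) - (x j + s * w j)| ^ p)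
    - 2 * μ * (∑ u, |x u| ^ p + s * (p * ∑ u, ph p (x u) * w u))
  have hnn : ∀ s, 0 ≤ h s := by
    intro s
    obtain ⟨c, hc⟩ := hmin (fun k => x k + s * w k)
    have ht := tangent_sum p (by linarith) x (fun k => x k + s * w k - c)
    have h2 : ∑ u, ph p (x u) * (x u + s * w u - c - x u) = s * ∑ u, ph p (x u) * w u := by
      have : ∀ u, ph p (x u) * (x u + s * w u - c - x u)
          = s * (ph p (x u) * w u) - ph p (x u) * c := by intro u; ring
      simp only [this]
      rw [Finset.sum_sub_distrib, ← Finset.sum_mul, hx, ← Finset.mul_sum]; ring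
    rw [h2] at ht
    have h3 := mul_le_mul_of_nonneg_left ht (by linarith : 0 ≤ 2 * μ)
    simp only [E2] at hc
    simp only [h]
    have h4 : s * (p * ∑ u, ph p (x u) * w u) = p * (s * ∑ u, ph p (x u) * w u) := by ring
    rw [h4]
    linarith
  have h0 : h 0 = 0 := by
    simp only [h, zero_mul, add_zero]
    simp only [E2] at hE
    linarith
  have hlm : IsLocalMin h 0 := by
    refine Filter.Eventually.of_forall (fun s => ?_)
    rw [h0]; exact hnn s
  have hd : HasDerivAt h ((∑ k, ∑ j, p * ph p (x k - x j) * (w k - w j))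
      - 2 * μ * (p * ∑ u, ph p (x u) * w u)) 0 := by
    apply HasDerivAt.sub
    · refine HasDerivAt.fun_sum (fun k _ => HasDerivAt.fun_sum (fun j _ => ?_))
      have g1 : HasDerivAt (fun s : ℝ => (x k + s * w k) - (x j + s * w j)) (w k - w j) 0 := by
        have a1 := ((hasDerivAt_id (0:ℝ)).mul_const (w k)).const_add (x k)
        have a2 := ((hasDerivAt_id (0:ℝ)).mul_const (w j)).const_add (x j)
        have a3 := a1.fun_sub a2
        simp only [one_mul, id] at a3
        exact a3
      have g2 := hasDerivAt_abs_rpow ((x k + 0 * w k) - (x j + 0 * w j)) (by linarith : 1 < p)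
      have g3 := HasDerivAt.comp (0:ℝ) g2 g1
      have g4 : p * ph p (x k - x j) * (w k - w j) = p * |x k + 0 * w k - (x j + 0 * w j)| ^ (p - 2)
          * (x k + 0 * w k - (x j + 0 * w j)) * (w k - w j) := by
        simp only [zero_mul, add_zero, ph]; ring
      rw [g4]
      exact g3
    · have a1 := (((hasDerivAt_id (0:ℝ)).mul_const (p * ∑ u, ph p (x u) * w u)).const_add
        (∑ u, |x u| ^ p)).const_mul (2 * μ)
      simpa using a1
  have hz := hlm.hasDerivAt_eq_zero hd
  have hw1 : ∑ u, ph p (x u) * w u = ph p (x i) := by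
    rw [hw]; simp [Pi.single_apply]
  have hA : ∑ k, ∑ j, ph p (x k - x j) * w k = ∑ j, ph p (x i - x j) := by
    rw [hw]; simp [Pi.single_apply]
  have hB : ∑ k, ∑ j, ph p (x k - x j) * w j = - ∑ j, ph p (x i - x j) := by
    rw [Finset.sum_comm, ← hA, ← Finset.sum_neg_distrib]
    refine Finset.sum_congr rfl (fun k _ => ?_)
    rw [← Finset.sum_neg_distrib]
    refine Finset.sum_congr rfl (fun j _ => ?_)
    rw [← neg_sub, ph_neg]; ring
  have hC : ∑ k, ∑ j, p * ph p (x k - x j) * (w k - w j)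
      = p * (2 * ∑ j, ph p (x i - x j)) := by
    have e : ∀ k j, p * ph p (x k - x j) * (w k - w j)
        = p * (ph p (x k - x j) * w k - ph p (x k - x j) * w j) := by intros; ring
    simp only [e, ← Finset.mul_sum, Finset.sum_sub_distrib, hA, hB]
    ring
  rw [hC, hw1] at hz
  have hp0 : (2 * p) ≠ 0 := by linarith
  refine mul_left_cancel₀ hp0 ?_
  linarith

lemma E2_hom (m : ℕ) (p s : ℝ) (hs : 0 < s) (x : Fin m → ℝ) :
    E2 m p (fun u => s * x u) = s ^ p * E2 m p x := by
  unfold E2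
  simp only [Finset.mul_sum]
  refine Finset.sum_congr rfl (fun i _ => Finset.sum_congr rfl (fun j _ => ?_))
  rw [← mul_sub, abs_mul, abs_of_pos hs, Real.mul_rpow hs.le (abs_nonneg _)]

lemma E2_shift (m : ℕ) (p c : ℝ) (x : Fin m → ℝ) :
    E2 m p (fun u => x u - c) = E2 m p x := by
  unfold E2
  simp

lemma E2_nonneg (m : ℕ) (p : ℝ) (x : Fin m → ℝ) : 0 ≤ E2 m p x := by
  unfold E2
  positivity

lemma normalise (m : ℕ) (p : ℝ) (hp : 2 < p) (y : Fin m → ℝ) (hy : ∑ u, ph p (y u) = 0)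
    (hR : 0 < ∑ u, |y u| ^ p) : ∃ s, 0 < s ∧ s ^ p * ∑ u, |y u| ^ p = 1 ∧
      ∑ u, |s * y u| ^ p = 1 ∧ ∑ u, ph p (s * y u) = 0 := by
  have hs : 0 < (∑ u, |y u| ^ p) ^ (-(1 / p)) := by positivity
  refine ⟨(∑ u, |y u| ^ p) ^ (-(1 / p)), hs, ?_, ?_, ?_⟩
  all_goals
    have h1 : ((∑ u, |y u| ^ p) ^ (-(1 / p))) ^ p * ∑ u, |y u| ^ p = 1 := by
      rw [← Real.rpow_mul hR.le, show -(1 / p) * p = -1 by field_simp, Real.rpow_neg_one]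
      exact inv_mul_cancel₀ hR.ne'
  · exact h1
  · refine Eq.trans ?_ h1
    rw [Finset.mul_sum]
    refine Finset.sum_congr rfl (fun u _ => ?_)
    rw [abs_mul, abs_of_pos hs, Real.mul_rpow hs.le (abs_nonneg _)]
  · simp only [ph_hom p _ _ hs]
    rw [← Finset.mul_sum, hy, mul_zero]

lemma lower (m : ℕ) (hm : 2 ≤ m) (p : ℝ) (hp : 2 < p) (y : Fin m → ℝ)
    (hy : ∑ u, ph p (y u) = 0) :
    2 * ((m:ℝ) - 2 + 2 ^ (p - 1)) * ∑ u, |y u| ^ p ≤ E2 m p y := by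
  have hRnn : ∀ y : Fin m → ℝ, 0 ≤ ∑ u, |y u| ^ p := fun y => by positivity
  rcases (hRnn y).eq_or_lt with h0 | hR
  · rw [← h0, mul_zero]; exact E2_nonneg m p y
  let S : Set (Fin m → ℝ) := {x | ∑ u, |x u| ^ p = 1 ∧ ∑ u, ph p (x u) = 0}
  have hcR : Continuous (fun x : Fin m → ℝ => ∑ u, |x u| ^ p) := by
    refine continuous_finsetSum _ (fun u _ => ?_)
    exact (continuous_abs.comp (continuous_apply u)).rpow_const (fun _ => Or.inr (by linarith))
  have hcP : Continuous (fun x : Fin m → ℝ => ∑ u, ph p (x u)) :=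
    continuous_finsetSum _ (fun u _ => (ph_cont p hp).comp (continuous_apply u))
  have hcE : Continuous (E2 m p) := by
    unfold E2
    refine continuous_finsetSum _ (fun i _ => continuous_finsetSum _ (fun j _ => ?_))
    exact (continuous_abs.comp ((continuous_apply i).sub (continuous_apply j))).rpow_const
      (fun _ => Or.inr (by linarith))
  have hcl : IsClosed S :=
    (isClosed_eq hcR continuous_const).inter (isClosed_eq hcP continuous_const)
  have hbd : S ⊆ Set.Icc (fun _ => (-1:ℝ)) (fun _ => 1) := by
    intro x hx
    have hb : ∀ u, |x u| ≤ 1 := by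
      intro u
      have h1 : |x u| ^ p ≤ ∑ u, |x u| ^ p :=
        Finset.single_le_sum (f := fun u => |x u| ^ p) (fun u _ => by positivity)
          (Finset.mem_univ u)
      rw [hx.1] at h1
      by_contra hcon
      push Not at hcon
      linarith [Real.one_lt_rpow hcon (by linarith : 0 < p)]
    exact ⟨fun u => (abs_le.mp (hb u)).1, fun u => (abs_le.mp (hb u)).2⟩
  have hcomp : IsCompact S := isCompact_Icc.of_isClosed_subset hcl hbd
  obtain ⟨s, hs, hs1, hs2, hs3⟩ := normalise m p hp y hy hR
  obtain ⟨x, hxS, hxmin⟩ := hcomp.exists_isMinOn ⟨fun u => s * y u, hs2, hs3⟩ hcE.continuousOn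
  have hgen : ∀ z : Fin m → ℝ, ∑ u, ph p (z u) = 0 → E2 m p x * ∑ u, |z u| ^ p ≤ E2 m p z := by
    intro z hz
    rcases (hRnn z).eq_or_lt with h0 | hRz
    · rw [← h0, mul_zero]; exact E2_nonneg m p z
    obtain ⟨t, ht, ht1, ht2, ht3⟩ := normalise m p hp z hz hRz
    have h1 : E2 m p x ≤ E2 m p (fun u => t * z u) := hxmin ⟨ht2, ht3⟩
    rw [E2_hom m p t ht] at h1
    have h2 := mul_le_mul_of_nonneg_right h1 hRz.le
    calc _ ≤ _ := h2
      _ = (t ^ p * ∑ u, |z u| ^ p) * E2 m p z := by ring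
      _ = _ := by rw [ht1, one_mul]
  have heig := euler m p hp (E2 m p x / 2) (by linarith [E2_nonneg m p x]) x hxS.2
    (fun z => by
      obtain ⟨c, hc⟩ := exists_c m hm p hp z
      refine ⟨c, ?_⟩
      have := hgen (fun u => z u - c) hc
      rw [E2_shift] at this
      rw [show 2 * (E2 m p x / 2) = E2 m p x by ring]
      exact this)
    (by rw [hxS.1]; ring)
  have hne : ∃ u, x u ≠ 0 := by
    by_contra hcon
    push Not at hcon
    have := hxS.1
    simp [hcon, Real.zero_rpow (by linarith : p ≠ 0)] at this
  have hk := key m p hp _ x hxS.2 hne heig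
  refine le_trans ?_ (hgen y hy)
  refine mul_le_mul_of_nonneg_right ?_ hR.le
  linarith

end KmAux

/-- Amghibech: for p > 2, λ_{1,p} of the complete graph K_m equals
(m - 2 + 2^{p-1})/(m - 1). -/
theorem stmt5 (m : ℕ) (hm : 2 ≤ m) (p : ℝ) (hp : 2 < p) :
    lambda1 p (fun e : {e : Fin m × Fin m // e.1 < e.2} => e.val) =
      ((m : ℝ) - 2 + 2 ^ (p - 1)) / ((m : ℝ) - 1) := by
  have hm2 : (2:ℝ) ≤ m := by exact_mod_cast hm
  have hm1 : 0 < (m:ℝ) - 1 := by linarith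
  unfold lambda1
  apply IsLeast.csInf_eq
  constructor
  · obtain ⟨u, hu⟩ : ∃ u : Fin m, u = ⟨0, by omega⟩ := ⟨_, rfl⟩
    obtain ⟨v, hv⟩ : ∃ v : Fin m, v = ⟨1, by omega⟩ := ⟨_, rfl⟩
    have huv : u ≠ v := by rw [hu, hv]; simp
    obtain ⟨x, hx⟩ : ∃ x : Fin m → ℝ, x = fun j => if j = u then 1 else if j = v then -1 else 0 :=
      ⟨_, rfl⟩
    have xu : x u = 1 := by simp [hx]
    have xv : x v = -1 := by simp [hx, huv.symm]
    have xo : ∀ j, j ≠ u → j ≠ v → x j = 0 := by intro j h1 h2; simp [hx, h1, h2]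
    have hz : (0:ℝ) ^ p = 0 := Real.zero_rpow (by linarith)
    refine ⟨x, ⟨u, v, by rw [xu, xv]; norm_num⟩, ?_⟩
    have hph : ∑ j, KmAux.ph p (x j - 0) = 0 := by
      rw [KmAux.sum_two_eq m u v huv _ 0 (fun j h1 h2 => by simp [xo j h1 h2, KmAux.ph_zero]),
        xu, xv, sub_zero, sub_zero, KmAux.ph_neg]
      ring
    rw [KmAux.denom_eq m p hp x 0 hph]
    have hD : ∑ j, |x j - 0| ^ p = 2 := by
      rw [KmAux.sum_two_eq m u v huv _ 0 (fun j h1 h2 => by simp [xo j h1 h2, hz]), xu, xv]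
      norm_num
    have hE := KmAux.energy_eq m p hp x
    have r1 : ∑ j, |x u - x j| ^ p = 2 ^ p + ((m:ℝ) - 2) := by
      rw [KmAux.sum_two_eq m u v huv _ 1 (fun j h1 h2 => by simp [xo j h1 h2, xu]), xu, xv]
      norm_num [hz]
    have r2 : ∑ j, |x v - x j| ^ p = 2 ^ p + ((m:ℝ) - 2) := by
      rw [KmAux.sum_two_eq m u v huv _ 1 (fun j h1 h2 => by simp [xo j h1 h2, xv]), xu, xv]
      norm_num [hz]
    have r3 : ∀ i, i ≠ u → i ≠ v → ∑ j, |x i - x j| ^ p = 2 := by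
      intro i hi1 hi2
      rw [KmAux.sum_two_eq m u v huv _ 0
        (fun j h1 h2 => by simp [xo j h1 h2, xo i hi1 hi2, hz]), xu, xv, xo i hi1 hi2]
      norm_num
    rw [KmAux.sum_two_eq m u v huv _ 2 r3, r1, r2] at hE
    have h2p : (2:ℝ) ^ p = 2 ^ (p - 1) * 2 := by
      rw [← Real.rpow_add_one (by norm_num)]; congr 1; ring
    rw [hD, div_eq_div_iff hm1.ne' (by positivity)]
    rw [h2p] at hE
    have hE' : graphEnergy p (fun e : {e : Fin m × Fin m // e.1 < e.2} => e.val) x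
        = 2 * ((m:ℝ) - 2 + 2 ^ (p - 1)) := by linarith
    rw [hE']; ring
  · rintro r ⟨x, ⟨u, v, huv⟩, rfl⟩
    obtain ⟨c, hc⟩ := KmAux.exists_c m hm p hp x
    have hl := KmAux.lower m hm p hp (fun j => x j - c) hc
    rw [KmAux.E2_shift] at hl
    have hE := KmAux.energy_eq m p hp x
    rw [KmAux.denom_eq m p hp x c hc]
    have hpos : 0 < ∑ j, |x j - c| ^ p := by
      have : ∃ w, x w ≠ c := by
        by_contra hcon
        push Not at hcon
        exact huv ((hcon u).trans (hcon v).symm)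
      obtain ⟨w, hw⟩ := this
      refine Finset.sum_pos' (fun j _ => by positivity) ⟨w, Finset.mem_univ _, ?_⟩
      exact Real.rpow_pos_of_pos (abs_pos.mpr (sub_ne_zero.mpr hw)) _
    rw [div_le_div_iff₀ hm1 (by positivity)]
    unfold KmAux.E2 at hl
    rw [← hE] at hl
    have hl' : ((m:ℝ) - 2 + 2 ^ (p - 1)) * ∑ j, |x j - c| ^ p
        ≤ graphEnergy p (fun e : {e : Fin m × Fin m // e.1 < e.2} => e.val) x := by linarith
    have := mul_le_mul_of_nonneg_right hl' hm1.le
    linarith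
end

section
/- For p > 2 and integers k, M ≥ 2, the first positive eigenvalue of the p-Laplacian of the complete k-partite graph K_{k×M} with k parts of M vertices each satisfies 1 ≥ λ_{1,p}(K_{k×M}) ≥ (m - 2 + 2^{p-1})·k / (m·(k - 1 + 2^{p+2})), where m = kM. -/
open Finset

lemma four_trig {V : Type} [Fintype V] (a : V → ℝ) (ha : ∑ u, a u = 0) :
    2 * (Fintype.card V : ℝ) * ∑ u, (Real.cos (a u) - 1 + (a u)^2/2) ≤
    ∑ u, ∑ v, (Real.cos (a u - a v) - 1 + (a u - a v)^2/2) := by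
  have h1 : ∀ u v, (Real.cos (a u - a v) - 1 + (a u - a v)^2/2) =
      Real.cos (a u) * Real.cos (a v) + Real.sin (a u) * Real.sin (a v) - 1 + (a u)^2/2
        + (a v)^2/2 - a u * a v := by
    intro u v; rw [Real.cos_sub]; ring
  simp only [h1, sum_add_distrib, sum_sub_distrib, ← mul_sum, ← sum_mul, ha, sum_const,
    card_univ, nsmul_eq_mul, ← sum_div]
  nlinarith [sq_nonneg (∑ u, Real.cos (a u) - (Fintype.card V : ℝ)),
    sq_nonneg (∑ u, Real.sin (a u))]

noncomputable def hcos (t : ℝ) : ℝ := Real.cos t - 1 + t^2/2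

lemma hcos_nonneg (t : ℝ) : 0 ≤ hcos t := by
  have := Real.one_sub_sq_div_two_le_cos (x := t)
  unfold hcos; linarith

lemma hcos_abs (t s : ℝ) : hcos (|t| * s) = hcos (t * s) := by
  unfold hcos
  rcases abs_choice t with h | h <;> rw [h]
  simp [Real.cos_neg]

lemma hcos_int (p : ℝ) (h2 : 2 < p) (h4 : p < 4) :
    MeasureTheory.IntegrableOn (fun s => hcos s * s ^ (-p-1)) (Set.Ioi 0) := by
  have hm : Measurable (fun s : ℝ => hcos s * s ^ (-p-1)) := by
    unfold hcos; fun_prop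
  rw [← Set.Ioc_union_Ioi_eq_Ioi (zero_le_one' ℝ)]
  refine MeasureTheory.IntegrableOn.union ?_ ?_
  · have hi : MeasureTheory.IntegrableOn (fun s : ℝ => s ^ (3-p)) (Set.Ioc 0 1) := by
      have := (intervalIntegral.intervalIntegrable_rpow' (a := 0) (b := 1) (r := 3 - p) (by linarith))
      exact (intervalIntegrable_iff_integrableOn_Ioc_of_le zero_le_one).1 this
    refine MeasureTheory.Integrable.mono' hi hm.aestronglyMeasurable ?_
    refine (MeasureTheory.ae_restrict_iff' measurableSet_Ioc).2 (Filter.Eventually.of_forall ?_)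
    rintro s ⟨h0, h1⟩
    have hs := Real.rpow_nonneg h0.le (-p-1)
    rw [Real.norm_of_nonneg (mul_nonneg (hcos_nonneg s) hs)]
    have hb := Real.cos_bound (x := s) (by rw [abs_of_pos h0]; exact h1)
    have hb2 := (abs_le.1 hb).2
    rw [abs_of_pos h0] at hb2
    have hle : hcos s ≤ s ^ 4 := by
      unfold hcos
      nlinarith [pow_pos h0 4]
    have : s ^ (3 - p) = s ^ 4 * s ^ (-p-1) := by
      rw [← Real.rpow_natCast, ← Real.rpow_add h0]; congr 1; push_cast; ring
    rw [this]; gcongr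
  · have hi : MeasureTheory.IntegrableOn (fun s : ℝ => s ^ (1-p)) (Set.Ioi 1) :=
      integrableOn_Ioi_rpow_of_lt (by linarith) zero_lt_one
    refine MeasureTheory.Integrable.mono' hi hm.aestronglyMeasurable ?_
    refine (MeasureTheory.ae_restrict_iff' measurableSet_Ioi).2 (Filter.Eventually.of_forall ?_)
    intro s h1
    have h0 : 0 < s := lt_trans zero_lt_one h1
    have hs := Real.rpow_nonneg h0.le (-p-1)
    rw [Real.norm_of_nonneg (mul_nonneg (hcos_nonneg s) hs)]
    have hle : hcos s ≤ s ^ 2 := by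
      unfold hcos
      nlinarith [pow_pos h0 2, Real.cos_le_one s]
    have : s ^ (1 - p) = s ^ 2 * s ^ (-p-1) := by
      rw [← Real.rpow_natCast, ← Real.rpow_add h0]; congr 1; push_cast; ring
    rw [this]; gcongr

lemma hcos_pos (p : ℝ) (h2 : 2 < p) (h4 : p < 4) :
    0 < ∫ s in Set.Ioi (0:ℝ), hcos s * s ^ (-p-1) := by
  rw [MeasureTheory.setIntegral_pos_iff_support_of_nonneg_ae _ (hcos_int p h2 h4)]
  · have : Set.Ioi (0:ℝ) ⊆ (Function.support fun s => hcos s * s ^ (-p-1)) ∩ Set.Ioi 0 := by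
      intro s hs
      refine ⟨?_, hs⟩
      have hs' : 0 < s := hs
      have h1 := Real.one_sub_sq_div_two_lt_cos (x := s) hs'.ne'
      have : 0 < hcos s * s ^ (-p-1) := by
        refine mul_pos ?_ (Real.rpow_pos_of_pos hs' _)
        unfold hcos; linarith
      exact this.ne'
    refine lt_of_lt_of_le ?_ (MeasureTheory.measure_mono this)
    simp
  · refine (MeasureTheory.ae_restrict_iff' measurableSet_Ioi).2 (Filter.Eventually.of_forall ?_)
    intro s hs
    exact mul_nonneg (hcos_nonneg s) (Real.rpow_nonneg (le_of_lt hs) _)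

lemma hcos_scale_aux (p t s : ℝ) (ht : t ≠ 0) (hs : 0 < s) :
    hcos (t * s) * s ^ (-p-1) =
      |t| ^ (p+1) * (hcos (|t| * s) * (|t| * s) ^ (-p-1)) := by
  have h := abs_pos.2 ht
  rw [hcos_abs, Real.mul_rpow h.le hs.le]
  have : |t| ^ (p+1) * |t| ^ (-p-1) = 1 := by
    rw [← Real.rpow_add h]; simp
  linear_combination (-(hcos (t * s) * s ^ (-p-1))) * this

lemma hcos_scale_int (p : ℝ) (h2 : 2 < p) (h4 : p < 4) (t : ℝ) :
    MeasureTheory.IntegrableOn (fun s => hcos (t * s) * s ^ (-p-1)) (Set.Ioi 0) := by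
  by_cases ht : t = 0
  · subst ht; simp [hcos]
  have h := abs_pos.2 ht
  have := (MeasureTheory.integrableOn_Ioi_comp_mul_left_iff (fun s => hcos s * s ^ (-p-1)) 0 h).2
    (by simpa using hcos_int p h2 h4)
  refine (MeasureTheory.integrableOn_congr_fun ?_ measurableSet_Ioi).2 (this.const_mul (|t|^(p+1)))
  intro s hs
  exact hcos_scale_aux p t s ht hs

lemma hcos_scale (p : ℝ) (h2 : 2 < p) (t : ℝ) :
    ∫ s in Set.Ioi (0:ℝ), hcos (t * s) * s ^ (-p-1) =
      |t| ^ p * ∫ s in Set.Ioi (0:ℝ), hcos s * s ^ (-p-1) := by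
  by_cases ht : t = 0
  · subst ht; simp [hcos, Real.zero_rpow (by linarith : p ≠ 0)]
  have h := abs_pos.2 ht
  rw [MeasureTheory.setIntegral_congr_fun measurableSet_Ioi
    (fun s hs => hcos_scale_aux p t s ht hs), MeasureTheory.integral_const_mul,
    MeasureTheory.integral_comp_mul_left_Ioi (fun s => hcos s * s ^ (-p-1)) 0 h]
  simp only [mul_zero, smul_eq_mul]
  rw [Real.rpow_add h, Real.rpow_one]
  field_simp

lemma main_low {V : Type} [Fintype V] (p : ℝ) (h2 : 2 < p) (h4 : p < 4)
    (a : V → ℝ) (ha : ∑ u, a u = 0) :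
    2 * (Fintype.card V : ℝ) * ∑ u, |a u| ^ p ≤ ∑ u, ∑ v, |a u - a v| ^ p := by
  have hA := hcos_pos p h2 h4
  refine le_of_mul_le_mul_right ?_ hA
  simp only [mul_assoc, sum_mul, ← hcos_scale p h2]
  rw [← MeasureTheory.integral_finsetSum _ (fun u _ => hcos_scale_int p h2 h4 (a u)),
    ← MeasureTheory.integral_const_mul, ← MeasureTheory.integral_const_mul]
  simp_rw [← MeasureTheory.integral_finsetSum univ
    (fun v _ => hcos_scale_int p h2 h4 (_ - a v))]
  rw [← MeasureTheory.integral_finsetSum _ (fun u _ => MeasureTheory.integrable_finsetSum _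
    (fun v _ => hcos_scale_int p h2 h4 (a u - a v)))]
  refine MeasureTheory.setIntegral_mono_on ?_ ?_ measurableSet_Ioi ?_
  · exact ((MeasureTheory.integrable_finsetSum _
      (fun u _ => hcos_scale_int p h2 h4 (a u))).const_mul _).const_mul _
  · exact MeasureTheory.integrable_finsetSum _ (fun u _ => MeasureTheory.integrable_finsetSum _
      (fun v _ => hcos_scale_int p h2 h4 (a u - a v)))
  · intro s hs
    have := four_trig (fun u => a u * s) (by rw [← sum_mul, ha, zero_mul])
    simp only [← sum_mul, ← mul_assoc]
    refine mul_le_mul_of_nonneg_right ?_ (Real.rpow_nonneg (le_of_lt hs) _)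
    simpa only [hcos, sub_mul] using this

lemma pq_aux (q : ℝ) (hq : 2 ≤ q) (a b : ℝ) (ha : 0 < a) (hb : 0 < b) :
    a ^ q + b ^ q + q * a ^ (q-1) * b ≤ (a + b) ^ q := by
  have hab : 0 < a + b := by positivity
  have e : ∀ x : ℝ, 0 < x → x ^ q = x * x ^ (q-1) := by
    intro x hx
    rw [Real.rpow_sub_one hx.ne']; field_simp
  have e2 : a ^ (q-1) = a * a ^ (q-2) := by
    rw [← Real.rpow_one_add' ha.le (by linarith)]; congr 1; ring
  have s1 : a ^ (q-1) + b ^ (q-1) ≤ (a+b) ^ (q-1) :=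
    Real.add_rpow_le_rpow_add ha.le hb.le (by linarith)
  have s2 : a ^ (q-1) + (q-1) * a ^ (q-2) * b ≤ (a+b) ^ (q-1) := by
    have := one_add_mul_self_le_rpow_one_add (s := b / a) (by have := div_pos hb ha; linarith) (p := q-1) (by linarith)
    have h3 : a + b = a * (1 + b / a) := by field_simp
    rw [h3, Real.mul_rpow ha.le (by positivity)]
    have h4 := mul_le_mul_of_nonneg_left this (Real.rpow_nonneg ha.le (q-1))
    refine le_trans (le_of_eq ?_) h4
    rw [e2]; field_simp
  rw [e _ hab, e a ha, e b hb]
  have t1 := mul_le_mul_of_nonneg_left s1 hb.le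
  have t2 := mul_le_mul_of_nonneg_left s2 ha.le
  have : q * a ^ (q-1) * b = (q-1) * (a * a ^ (q-2)) * b + a ^ (q-1) * b := by rw [← e2]; ring
  rw [this]
  nlinarith

lemma pq_main (p : ℝ) (hp : 3 ≤ p) (a b : ℝ) (ha : 0 < a) (hb : 0 < b) :
    a ^ p + b ^ p + p * a ^ (p-1) * b + p * b ^ (p-1) * a ≤ (a + b) ^ p := by
  have hab : 0 < a + b := by positivity
  have e : ∀ x : ℝ, 0 < x → x ^ p = x * x ^ (p-1) := by
    intro x hx
    rw [Real.rpow_sub_one hx.ne']; field_simp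
  have e2 : ∀ x : ℝ, 0 < x → x ^ (p-1) = x * x ^ (p-1-1) := by
    intro x hx
    rw [Real.rpow_sub_one hx.ne' (p-1)]; field_simp
  have h1 := mul_le_mul_of_nonneg_left (pq_aux (p-1) (by linarith) a b ha hb) ha.le
  have h2 := mul_le_mul_of_nonneg_left (pq_aux (p-1) (by linarith) b a hb ha) hb.le
  rw [add_comm b a] at h2
  rw [e _ hab, e a ha, e b hb]
  have k1 := e2 a ha
  have k2 := e2 b hb
  have l1 : a * ((p-1) * a ^ (p-1-1) * b) = (p-1) * a ^ (p-1) * b := by rw [k1]; ring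
  have l2 : b * ((p-1) * b ^ (p-1-1) * a) = (p-1) * b ^ (p-1) * a := by rw [k2]; ring
  nlinarith

lemma pq_minus (p : ℝ) (hp : 3 ≤ p) (a b : ℝ) (ha : 0 < a) (hb : 0 < b) (hab : b ≤ a) :
    a ^ p + b ^ p - p * a ^ (p-1) * b - p * b ^ (p-1) * a ≤ (a - b) ^ p := by
  have e : ∀ x : ℝ, 0 < x → x ^ p = x * x ^ (p-1) := by
    intro x hx
    rw [Real.rpow_sub_one hx.ne']; field_simp
  have h0 : b / a ≤ 1 := (div_le_one ha).2 hab
  have := one_add_mul_self_le_rpow_one_add (s := -(b / a)) (by linarith) (p := p) (by linarith)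
  have h3 : a - b = a * (1 + -(b / a)) := by field_simp; ring
  rw [h3, Real.mul_rpow ha.le (by linarith)]
  have h4 := mul_le_mul_of_nonneg_left this (Real.rpow_nonneg ha.le p)
  have h5 : a ^ p * (1 + p * -(b/a)) = a ^ p - p * a ^ (p-1) * b := by
    rw [e a ha]; field_simp; ring
  have h6 : b ^ p ≤ p * b ^ (p-1) * a := by
    rw [e b hb]
    have := Real.rpow_pos_of_pos hb (p-1)
    have : b * b ^ (p-1) ≤ a * b ^ (p-1) := by gcongr
    nlinarith [mul_pos ha (Real.rpow_pos_of_pos hb (p-1))]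
  linarith

noncomputable def sphi (p a : ℝ) : ℝ := SignType.sign a * |a| ^ (p-1)

lemma pq_all (p : ℝ) (hp : 3 ≤ p) (a b : ℝ) :
    |a| ^ p + |b| ^ p - p * sphi p a * b - p * sphi p b * a ≤ |a - b| ^ p := by
  have hz : (0:ℝ) ^ p = 0 := Real.zero_rpow (by linarith)
  have hz' : (0:ℝ) ^ (p-1) = 0 := Real.zero_rpow (by linarith)
  unfold sphi
  rcases lt_trichotomy a 0 with ha | ha | ha <;> rcases lt_trichotomy b 0 with hb | hb | hb
  · rw [abs_of_neg ha, abs_of_neg hb, sign_neg ha, sign_neg hb]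
    rcases le_total a b with h | h
    · have := pq_minus p hp (-a) (-b) (by linarith) (by linarith) (by linarith)
      rw [abs_of_nonpos (by linarith), show -(a-b) = -a - -b by ring]
      simp only [sub_neg_eq_add, SignType.coe_neg_one] at this ⊢; nlinarith
    · have := pq_minus p hp (-b) (-a) (by linarith) (by linarith) (by linarith)
      rw [abs_of_nonneg (by linarith), show (a-b) = -b - -a by ring]
      simp only [sub_neg_eq_add, SignType.coe_neg_one] at this ⊢; nlinarith
  · simp [hb, hz, hz']
  · have := pq_main p hp (-a) b (by linarith) (by linarith)
    rw [abs_of_neg ha, abs_of_pos hb, sign_neg ha, sign_pos hb, abs_of_neg (by linarith),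
      show -(a-b) = -a+b by ring]
    simp; nlinarith
  · simp [ha, hz, hz']
  · simp [ha, hb, hz]
  · simp [ha, hz, hz']
  · have := pq_main p hp a (-b) (by linarith) (by linarith)
    rw [abs_of_pos ha, abs_of_neg hb, sign_neg hb, sign_pos ha, abs_of_pos (by linarith),
      show (a-b) = a+-b by ring]
    simp; nlinarith
  · simp [hb, hz, hz']
  · rw [abs_of_pos ha, abs_of_pos hb, sign_pos ha, sign_pos hb]
    rcases le_total b a with h | h
    · have := pq_minus p hp a b (by linarith) (by linarith) (by linarith)
      rw [abs_of_nonneg (by linarith)]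
      simp; nlinarith
    · have := pq_minus p hp b a (by linarith) (by linarith) (by linarith)
      rw [abs_of_nonpos (by linarith), show -(a-b) = b - a by ring]
      simp; nlinarith

lemma main_high {V : Type} [Fintype V] (p : ℝ) (h3 : 3 ≤ p)
    (a : V → ℝ) (ha : ∑ u, a u = 0) :
    2 * (Fintype.card V : ℝ) * ∑ u, |a u| ^ p ≤ ∑ u, ∑ v, |a u - a v| ^ p := by
  refine le_trans (le_of_eq ?_) (sum_le_sum fun u _ => sum_le_sum fun v _ => pq_all p h3 (a u) (a v))
  have : ∀ u v, p * sphi p (a v) * a u = a u * (p * sphi p (a v)) := fun u v => by ring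
  simp only [this, sum_add_distrib, sum_sub_distrib, ← mul_sum, ← sum_mul, ha, sum_const,
    card_univ, nsmul_eq_mul]
  ring

/-- E ≥ m Σ|x-c|^p -/
lemma bound_m {V : Type} [Fintype V] [Nonempty V] (p : ℝ) (h2 : 2 < p) (x : V → ℝ) :
    ∃ c, 2 * (Fintype.card V : ℝ) * ∑ u, |x u - c| ^ p ≤ ∑ u, ∑ v, |x u - x v| ^ p := by
  refine ⟨(∑ u, x u) / Fintype.card V, ?_⟩
  set c := (∑ u, x u) / Fintype.card V with hc
  have h0 : (Fintype.card V : ℝ) ≠ 0 := by simp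
  have hs : ∑ u, (x u - c) = 0 := by
    simp only [sum_sub_distrib, sum_const, card_univ, nsmul_eq_mul, hc]
    field_simp; ring
  have e : ∀ u v, x u - x v = (x u - c) - (x v - c) := fun u v => by ring
  simp_rw [e]
  rcases lt_or_ge p 3 with h | h
  · exact main_low p h2 (by linarith) _ hs
  · exact main_high p h _ hs

/-- E ≥ 2^(p-1) Σ|x-c|^p -/
lemma bound_P {V : Type} [Fintype V] [Nonempty V] [DecidableEq V] (p : ℝ) (h2 : 2 < p) (x : V → ℝ)
    (hx : ∃ u v, x u ≠ x v) :
    ∃ c, 2 * (2:ℝ) ^ (p-1) * ∑ u, |x u - c| ^ p ≤ ∑ u, ∑ v, |x u - x v| ^ p := by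
  obtain ⟨i, hi⟩ := Finite.exists_max x
  obtain ⟨j, hj⟩ := Finite.exists_min x
  have hij : x j < x i := by
    obtain ⟨u, v, h⟩ := hx
    by_contra hc
    have := hi u; have := hi v; have := hj u; have := hj v
    exact h (by linarith)
  have hne : i ≠ j := fun h => by rw [h] at hij; exact lt_irrefl _ hij
  set c := (x i + x j) / 2 with hc
  refine ⟨c, ?_⟩
  have e2 : 2 * (2:ℝ) ^ (p-1) = 2 ^ p := by
    rw [Real.rpow_sub_one two_ne_zero]; field_simp
  rw [e2]
  have key : ∀ u, (2:ℝ)^p * |x u - c| ^ p ≤ |x u - x i| ^ p + |x u - x j| ^ p := by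
    intro u
    rw [← Real.mul_rpow zero_le_two (abs_nonneg _)]
    have a1 := Real.rpow_nonneg (abs_nonneg (x u - x i)) p
    have a2 := Real.rpow_nonneg (abs_nonneg (x u - x j)) p
    have := hi u
    have := hj u
    rcases le_total c (x u) with h | h
    · have : (2 * |x u - c|) ^ p ≤ |x u - x j| ^ p := by
        refine Real.rpow_le_rpow (by positivity) ?_ (by linarith)
        rw [abs_of_nonneg (by linarith), abs_of_nonneg (by linarith)]; linarith
      linarith
    · have : (2 * |x u - c|) ^ p ≤ |x u - x i| ^ p := by
        refine Real.rpow_le_rpow (by positivity) ?_ (by linarith)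
        rw [abs_of_nonpos (by linarith), abs_of_nonpos (by linarith)]; linarith
      linarith
  rw [mul_sum]
  refine sum_le_sum fun u _ => (key u).trans ?_
  rw [← sum_pair (f := fun v => |x u - x v| ^ p) hne]
  exact sum_le_sum_of_subset_of_nonneg (subset_univ _)
    (fun v _ _ => Real.rpow_nonneg (abs_nonneg _) _)

lemma part_card (k M : ℕ) (hM : 2 ≤ M) (u : Fin (k*M)) :
    (∑ v : Fin (k*M), if (u:ℕ)/M = (v:ℕ)/M then (1:ℝ) else 0) = M := by
  have hM0 : 0 < M := by omega
  rw [← finProdFinEquiv.sum_comp, Fintype.sum_prod_type]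
  have hu : (u:ℕ)/M < k := Nat.div_lt_of_lt_mul (lt_of_lt_of_eq u.2 (mul_comm k M))
  have : ∀ (a : Fin k) (b : Fin M), (((finProdFinEquiv (a,b) : Fin (k*M)) : ℕ) / M) = a := by
    intro a b
    simp [finProdFinEquiv, Nat.add_mul_div_left _ _ hM0, Nat.div_eq_of_lt b.2]
  simp only [this, sum_const, card_univ, Fintype.card_fin, nsmul_eq_mul]
  rw [sum_eq_single (⟨(u:ℕ)/M, hu⟩ : Fin k)]
  · simp
  · intro b _ hb
    rw [if_neg]; · simp
    intro h; exact hb (Fin.ext h.symm)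
  · simp

lemma copart_card (k M : ℕ) (hM : 2 ≤ M) (u : Fin (k*M)) :
    (∑ v : Fin (k*M), if (u:ℕ)/M ≠ (v:ℕ)/M then (1:ℝ) else 0) = ((k:ℝ)-1)*M := by
  have h := part_card k M hM u
  have : ∀ v : Fin (k*M), (if (u:ℕ)/M ≠ (v:ℕ)/M then (1:ℝ) else 0) =
    1 - if (u:ℕ)/M = (v:ℕ)/M then (1:ℝ) else 0 := by
    intro v; split_ifs <;> simp_all
  simp only [this, sum_sub_distrib, h]
  simp; ring

lemma edge_sum (k M : ℕ) (F : Fin (k*M) → Fin (k*M) → ℝ) :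
    (∑ e : {e : Fin (k * M) × Fin (k * M) // e.1 < e.2 ∧ (e.1 : ℕ) / M ≠ (e.2 : ℕ) / M},
      (F e.val.1 e.val.2 + F e.val.2 e.val.1)) =
    ∑ u : Fin (k*M), ∑ v : Fin (k*M), if (u:ℕ)/M ≠ (v:ℕ)/M then F u v else 0 := by
  have h1 : (∑ e : {e : Fin (k * M) × Fin (k * M) // e.1 < e.2 ∧ (e.1 : ℕ) / M ≠ (e.2 : ℕ) / M},
      (F e.val.1 e.val.2 + F e.val.2 e.val.1)) =
      ∑ e ∈ (univ : Finset (Fin (k * M) × Fin (k * M))).filter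
        (fun e => e.1 < e.2 ∧ (e.1 : ℕ) / M ≠ (e.2 : ℕ) / M), (F e.1 e.2 + F e.2 e.1) :=
    (sum_subtype (p := fun e : Fin (k * M) × Fin (k * M) =>
        e.1 < e.2 ∧ (e.1 : ℕ) / M ≠ (e.2 : ℕ) / M) _ (by simp)
      (fun e : Fin (k * M) × Fin (k * M) => F e.1 e.2 + F e.2 e.1)).symm
  rw [h1, sum_filter, Fintype.sum_prod_type]
  have h2 : ∀ u v : Fin (k*M), (if (u:ℕ)/M ≠ (v:ℕ)/M then F u v else 0) =
      (if u < v ∧ (u:ℕ)/M ≠ (v:ℕ)/M then F u v else 0) +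
      (if v < u ∧ (v:ℕ)/M ≠ (u:ℕ)/M then F u v else 0) := by
    intro u v
    rcases lt_trichotomy u v with h | h | h
    · simp [h, h.not_gt]
    · simp [h]
    · simp [h, h.not_gt, eq_comm]
  simp only [h2, sum_add_distrib]
  rw [sum_comm (f := fun (u v : Fin (k*M)) => if v < u ∧ (v:ℕ)/M ≠ (u:ℕ)/M then F u v else 0)]
  simp only [← sum_add_distrib]
  refine sum_congr rfl fun u _ => sum_congr rfl fun v _ => ?_
  split_ifs <;> simp

lemma val_eq (k M : ℕ) (hM : 2 ≤ M) (w : Fin (k*M)) :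
    (graphVal (fun e : {e : Fin (k * M) × Fin (k * M) //
        e.1 < e.2 ∧ (e.1 : ℕ) / M ≠ (e.2 : ℕ) / M} => e.val) w : ℝ) = ((k:ℝ)-1)*M := by
  unfold graphVal
  push_cast
  rw [edge_sum k M (fun a _ => if a = w then 1 else 0), sum_eq_single w]
  · simpa using copart_card k M hM w
  · intro b _ hb
    simp [hb]
  · simp

lemma energy_eq (k M : ℕ) (p : ℝ) (x : Fin (k*M) → ℝ) :
    2 * graphEnergy p (fun e : {e : Fin (k * M) × Fin (k * M) //
        e.1 < e.2 ∧ (e.1 : ℕ) / M ≠ (e.2 : ℕ) / M} => e.val) x =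
    ∑ u : Fin (k*M), ∑ v : Fin (k*M), if (u:ℕ)/M ≠ (v:ℕ)/M then |x u - x v|^p else 0 := by
  rw [← edge_sum k M (fun u v => |x u - x v|^p)]
  unfold graphEnergy
  rw [mul_sum]
  refine sum_congr rfl fun e _ => ?_
  rw [abs_sub_comm (x e.val.1)]; ring

lemma conv_ineq (p : ℝ) (hp : 2 < p) (a b : ℝ) :
    |a - b| ^ p ≤ 2 ^ (p-1) * (|a|^p + |b|^p) := by
  have h : (|a| + |b|) ^ p ≤ 2 ^ (p-1) * (|a|^p + |b|^p) := by
    have := NNReal.rpow_add_le_mul_rpow_add_rpow (Real.nnabs a) (Real.nnabs b) (p := p)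
      (by linarith)
    exact_mod_cast this
  refine le_trans (Real.rpow_le_rpow (abs_nonneg _) (abs_sub _ _) (by linarith)) h

lemma compare (k M : ℕ) (hM : 2 ≤ M) (p : ℝ) (hp : 2 < p) (x : Fin (k*M) → ℝ) :
    ((k:ℝ)-1) * ∑ u, ∑ v, |x u - x v|^p ≤ ((k:ℝ) - 1 + 2^p) *
    ∑ u : Fin (k*M), ∑ v : Fin (k*M), if (u:ℕ)/M ≠ (v:ℕ)/M then |x u - x v|^p else 0 := by
  set T := ∑ u : Fin (k*M), ∑ v : Fin (k*M), if (u:ℕ)/M ≠ (v:ℕ)/M then |x u - x v|^p else 0 with hT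
  set I := ∑ u : Fin (k*M), ∑ v : Fin (k*M), if (u:ℕ)/M = (v:ℕ)/M then |x u - x v|^p else 0 with hI
  have hS : ∑ u, ∑ v, |x u - x v|^p = I + T := by
    simp only [hI, hT, ← sum_add_distrib]
    refine sum_congr rfl fun u _ => sum_congr rfl fun v _ => ?_
    split_ifs <;> simp_all
  have hM0 : (0:ℝ) < M := by exact_mod_cast (by omega : 0 < M)
  -- triple sum
  have tri : ∀ u v w : Fin (k*M),
      (if (u:ℕ)/M = (v:ℕ)/M then |x u - x v|^p else 0) * (if (u:ℕ)/M ≠ (w:ℕ)/M then 1 else 0) ≤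
      2^(p-1) * ((if (u:ℕ)/M ≠ (w:ℕ)/M then |x u - x w|^p else 0) * (if (u:ℕ)/M = (v:ℕ)/M then 1 else 0)
       + (if (v:ℕ)/M ≠ (w:ℕ)/M then |x v - x w|^p else 0) * (if (v:ℕ)/M = (u:ℕ)/M then 1 else 0)) := by
    intro u v w
    by_cases h : (u:ℕ)/M = (v:ℕ)/M
    · by_cases h' : (v:ℕ)/M = (w:ℕ)/M
      · simp [h, h']
      · have := conv_ineq p hp (x u - x w) (x v - x w)
        simpa [h, h'] using this
    · simp [h, Ne.symm h, eq_comm]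
  have hsum := sum_le_sum (s := univ) fun u (_ : u ∈ univ) => sum_le_sum (s := univ)
    fun v (_ : v ∈ univ) => sum_le_sum (s := univ) fun w (_ : w ∈ univ) => tri u v w
  have hL : ∑ u : Fin (k*M), ∑ v : Fin (k*M), ∑ w : Fin (k*M),
      (if (u:ℕ)/M = (v:ℕ)/M then |x u - x v|^p else 0) * (if (u:ℕ)/M ≠ (w:ℕ)/M then (1:ℝ) else 0)
      = I * (((k:ℝ)-1)*M) := by
    simp only [← mul_sum, copart_card k M hM, ← sum_mul]
    rfl
  have hR1 : ∑ u : Fin (k*M), ∑ v : Fin (k*M), ∑ w : Fin (k*M),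
      (if (u:ℕ)/M ≠ (w:ℕ)/M then |x u - x w|^p else 0) * (if (u:ℕ)/M = (v:ℕ)/M then (1:ℝ) else 0)
      = T * M := by
    simp only [← sum_mul, ← mul_sum, part_card k M hM]
    rfl
  have hR2 : ∑ u : Fin (k*M), ∑ v : Fin (k*M), ∑ w : Fin (k*M),
      (if (v:ℕ)/M ≠ (w:ℕ)/M then |x v - x w|^p else 0) * (if (v:ℕ)/M = (u:ℕ)/M then (1:ℝ) else 0)
      = T * M := by
    rw [sum_comm]; exact hR1
  have hR := hsum
  simp only [← mul_sum, sum_add_distrib] at hR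
  simp only [← mul_sum] at hL hR1 hR2
  rw [hL, hR1, hR2] at hR
  have e2 : 2 * (2:ℝ) ^ (p-1) = 2 ^ p := by
    rw [Real.rpow_sub_one two_ne_zero]; field_simp
  have : ((k:ℝ)-1) * I ≤ 2^p * T := by
    refine le_of_mul_le_mul_right ?_ hM0
    rw [← e2]; nlinarith
  rw [hS]; nlinarith

lemma energy_lower (k M : ℕ) (hk : 2 ≤ k) (hM : 2 ≤ M) (p : ℝ) (hp : 2 < p)
    (x : Fin (k*M) → ℝ) (hx : ∃ u v, x u ≠ x v) :
    ∃ c, (((k * M : ℕ) : ℝ) - 2 + 2 ^ (p - 1)) * k /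
        (((k * M : ℕ) : ℝ) * ((k : ℝ) - 1 + 2 ^ (p + 2))) *
        ∑ u, |x u - c| ^ p * (((k:ℝ)-1)*M) ≤
      graphEnergy p (fun e : {e : Fin (k * M) × Fin (k * M) //
        e.1 < e.2 ∧ (e.1 : ℕ) / M ≠ (e.2 : ℕ) / M} => e.val) x := by
  have hne : Nonempty (Fin (k*M)) := ⟨hx.choose⟩
  have hkR : (2:ℝ) ≤ k := by exact_mod_cast hk
  have hMR : (2:ℝ) ≤ M := by exact_mod_cast hM
  have e1 : (2:ℝ) ^ (p+2) = 8 * 2 ^ (p-1) := by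
    rw [show p + 2 = 3 + (p-1) by ring, Real.rpow_add two_pos]; norm_num
  have e2 : (2:ℝ) ^ p = 2 * 2 ^ (p-1) := by
    rw [Real.rpow_sub_one two_ne_zero]; field_simp
  have hQ : (0:ℝ) < 2 ^ (p-1) := by positivity
  have hcmp := compare k M hM p hp x
  rw [← energy_eq, e2] at hcmp
  have bm := bound_m p hp x
  have bP := bound_P p hp x hx
  simp only [Fintype.card_fin] at bm
  rw [e1]
  set E := graphEnergy p (fun e : {e : Fin (k * M) × Fin (k * M) //
        e.1 < e.2 ∧ (e.1 : ℕ) / M ≠ (e.2 : ℕ) / M} => e.val) x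
  set S := ∑ u, ∑ v, |x u - x v|^p
  generalize (2:ℝ) ^ (p-1) = Q at *
  have hm : ((k * M : ℕ) : ℝ) = k * M := by push_cast; ring
  have hmk : 2 * (k:ℝ) ≤ k * M := by nlinarith
  -- reduce to a choice of constant N
  have red : ∀ N : ℝ, (k * M - 2 + Q) * ((k:ℝ) - 1 + 2 * Q) ≤ N * ((k:ℝ) - 1 + 8 * Q) →
      (∃ c, 2 * N * ∑ u, |x u - c| ^ p ≤ S) →
      ∃ c, (((k * M : ℕ) : ℝ) - 2 + Q) * k / (((k * M : ℕ) : ℝ) * ((k : ℝ) - 1 + 8 * Q)) *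
        ∑ u, |x u - c| ^ p * (((k:ℝ)-1)*M) ≤ E := by
    rintro N hN ⟨c, hc⟩
    refine ⟨c, ?_⟩
    rw [← sum_mul]
    have hA : 0 ≤ ∑ u, |x u - c| ^ p := sum_nonneg fun u _ => Real.rpow_nonneg (abs_nonneg _) _
    generalize ∑ u, |x u - c| ^ p = A at *
    have hk1 : (0:ℝ) < k - 1 := by linarith
    have h8 : 0 < (k:ℝ) - 1 + 8 * Q := by linarith
    have h2 : 0 < (k:ℝ) - 1 + 2 * Q := by linarith
    have : (((k * M : ℕ) : ℝ) - 2 + Q) * k / (((k * M : ℕ) : ℝ) * ((k : ℝ) - 1 + 8 * Q)) *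
        (A * (((k:ℝ)-1)*M)) = ((k * M - 2 + Q) * (k - 1) * A) / ((k : ℝ) - 1 + 8 * Q) := by
      rw [hm]; field_simp
    rw [this, div_le_iff₀ h8]
    have h3 : ((k:ℝ)-1) * N * A ≤ ((k:ℝ) - 1 + 2 * Q) * E := by nlinarith
    refine le_of_mul_le_mul_right ?_ h2
    calc (k * M - 2 + Q) * ((k:ℝ) - 1) * A * (k - 1 + 2 * Q)
        = ((k * M - 2 + Q) * ((k:ℝ) - 1 + 2 * Q)) * ((k - 1) * A) := by ring
      _ ≤ (N * ((k:ℝ) - 1 + 8 * Q)) * ((k - 1) * A) := by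
          exact mul_le_mul_of_nonneg_right hN (by positivity)
      _ = ((k:ℝ)-1) * N * A * ((k:ℝ) - 1 + 8 * Q) := by ring
      _ ≤ ((k:ℝ) - 1 + 2 * Q) * E * ((k:ℝ) - 1 + 8 * Q) := by gcongr
      _ = _ := by ring
  rw [hm] at bm
  generalize (k:ℝ) * M = m at *
  rcases le_total Q m with h | h
  · refine red m ?_ bm
    nlinarith [mul_nonneg hQ.le (sub_nonneg.2 h), mul_nonneg hQ.le (sub_nonneg.2 hmk)]
  · refine red Q ?_ bP
    nlinarith [mul_nonneg hQ.le (sub_nonneg.2 h), mul_nonneg hQ.le (sub_nonneg.2 hmk),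
      mul_nonneg (sub_nonneg.2 h) (by linarith : (0:ℝ) ≤ k - 1 + 2 * Q)]

lemma denom_pos (k M : ℕ) (hk : 2 ≤ k) (hM : 2 ≤ M) (p : ℝ) (hp : 2 < p)
    (x : Fin (k*M) → ℝ) (hx : ∃ u v, x u ≠ x v) :
    0 < graphDenom p (fun e : {e : Fin (k * M) × Fin (k * M) //
        e.1 < e.2 ∧ (e.1 : ℕ) / M ≠ (e.2 : ℕ) / M} => e.val) x := by
  obtain ⟨i, j, hij⟩ := hx
  have hkR : (2:ℝ) ≤ k := by exact_mod_cast hk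
  have hMR : (2:ℝ) ≤ M := by exact_mod_cast hM
  have hD : (0:ℝ) < ((k:ℝ)-1)*M := mul_pos (by linarith) (by linarith)
  have hp1 : (0:ℝ) < 2 ^ (p-1) := by positivity
  have hpos : 0 < |x i - x j| ^ p / 2 ^ (p-1) * (((k:ℝ)-1)*M) := by
    have : 0 < |x i - x j| := abs_pos.2 (sub_ne_zero.2 hij)
    positivity
  refine lt_of_lt_of_le hpos ?_
  unfold graphDenom
  refine le_csInf ⟨_, 0, rfl⟩ ?_
  rintro t ⟨c, rfl⟩
  simp only [val_eq k M hM]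
  rw [← sum_mul]
  refine mul_le_mul_of_nonneg_right ?_ hD.le
  rw [div_le_iff₀ hp1, mul_comm]
  have h := conv_ineq p hp (x i - c) (x j - c)
  rw [show x i - c - (x j - c) = x i - x j by ring] at h
  refine h.trans (mul_le_mul_of_nonneg_left ?_ hp1.le)
  have hne : i ≠ j := fun h => hij (by rw [h])
  rw [← sum_pair (f := fun v => |x v - c| ^ p) hne]
  exact sum_le_sum_of_subset_of_nonneg (subset_univ _)
    (fun v _ _ => Real.rpow_nonneg (abs_nonneg _) _)

lemma abs_bern (p : ℝ) (hp : 2 < p) (c : ℝ) : 1 + p * c ≤ |1 + c| ^ p := by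
  rcases le_or_gt (-1) c with h | h
  · rw [abs_of_nonneg (by linarith)]
    exact one_add_mul_self_le_rpow_one_add h (by linarith)
  · have := Real.rpow_nonneg (abs_nonneg (1 + c)) p
    nlinarith

lemma test_fun (k M : ℕ) (hk : 2 ≤ k) (hM : 2 ≤ M) (p : ℝ) (hp : 2 < p) :
    ∃ x : Fin (k*M) → ℝ, (∃ u v, x u ≠ x v) ∧
      graphEnergy p (fun e : {e : Fin (k * M) × Fin (k * M) //
        e.1 < e.2 ∧ (e.1 : ℕ) / M ≠ (e.2 : ℕ) / M} => e.val) x ≤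
      graphDenom p (fun e : {e : Fin (k * M) × Fin (k * M) //
        e.1 < e.2 ∧ (e.1 : ℕ) / M ≠ (e.2 : ℕ) / M} => e.val) x := by
  have hkR : (2:ℝ) ≤ k := by exact_mod_cast hk
  have hMR : (2:ℝ) ≤ M := by exact_mod_cast hM
  have hD : (0:ℝ) < ((k:ℝ)-1)*M := mul_pos (by linarith) (by linarith)
  have hz : (0:ℝ) ^ p = 0 := Real.zero_rpow (by linarith)
  have hkm : 2 ≤ k * M := by nlinarith
  let i : Fin (k*M) := ⟨0, by omega⟩
  let j : Fin (k*M) := ⟨1, by omega⟩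
  have hne : i ≠ j := by simp [i, j]
  have hi : (i:ℕ)/M = 0 := by simp [i]
  have hj : (j:ℕ)/M = 0 := Nat.div_eq_of_lt (by simp [j]; omega)
  let x : Fin (k*M) → ℝ := fun u => if u = i then 1 else if u = j then -1 else 0
  have xi : x i = 1 := by simp [x]
  have xj : x j = -1 := by simp [x, hne.symm]
  have x0 : ∀ u : Fin (k*M), (u:ℕ)/M ≠ 0 → x u = 0 := by
    intro u hu
    have h1 : u ≠ i := fun h => hu (by rw [h, hi])
    have h2 : u ≠ j := fun h => hu (by rw [h, hj])
    simp [x, h1, h2]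
  have hsum : ∑ u, |x u| ^ p = 2 := by
    rw [← sum_subset (subset_univ ({i, j} : Finset (Fin (k*M)))), sum_pair hne, xi, xj]
    · norm_num
    · intro u _ hu
      simp only [mem_insert, mem_singleton, not_or] at hu
      simp [x, hu.1, hu.2, hz]
  refine ⟨x, ⟨i, j, by rw [xi, xj]; norm_num⟩, ?_⟩
  have hE : 2 * graphEnergy p (fun e : {e : Fin (k * M) × Fin (k * M) //
        e.1 < e.2 ∧ (e.1 : ℕ) / M ≠ (e.2 : ℕ) / M} => e.val) x = 2 * (2 * (((k:ℝ)-1)*M)) := by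
    rw [energy_eq]
    have h2 : ∀ u v : Fin (k*M), (if (u:ℕ)/M ≠ (v:ℕ)/M then |x u - x v|^p else 0) =
        |x u|^p * (if (u:ℕ)/M ≠ (v:ℕ)/M then 1 else 0) +
        |x v|^p * (if (v:ℕ)/M ≠ (u:ℕ)/M then 1 else 0) := by
      intro u v
      by_cases h : (u:ℕ)/M = (v:ℕ)/M
      · simp [h]
      · have h' := Ne.symm h
        by_cases hu : (u:ℕ)/M = 0
        · rw [x0 v (by rw [← hu]; exact h')]
          simp [h, hz]
        · rw [x0 u hu]
          simp [h', h, hz]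
    simp only [h2, sum_add_distrib]
    rw [sum_comm (f := fun u v => |x v|^p * (if ((v : Fin (k*M)):ℕ)/M ≠ ((u : Fin (k*M)):ℕ)/M then 1 else 0))]
    simp only [← mul_sum, copart_card k M hM, ← sum_mul, hsum]
    ring
  have hE' := mul_left_cancel₀ two_ne_zero hE
  rw [hE']
  unfold graphDenom
  refine le_csInf ⟨_, 0, rfl⟩ ?_
  rintro t ⟨c, rfl⟩
  simp only [val_eq k M hM]
  rw [← sum_mul]
  refine mul_le_mul_of_nonneg_right ?_ hD.le
  have h1 := abs_bern p hp c
  have h2 := abs_bern p hp (-c)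
  have h3 : ∑ u ∈ ({i, j} : Finset (Fin (k*M))), |x u - c| ^ p ≤ ∑ u, |x u - c| ^ p :=
    sum_le_sum_of_subset_of_nonneg (subset_univ _)
      (fun v _ _ => Real.rpow_nonneg (abs_nonneg _) _)
  rw [sum_pair hne, xi, xj, show (-1 - c) = -(1 + c) by ring, abs_neg,
    show 1 - c = 1 + -c by ring] at h3
  linarith

/-- For p > 2 and k, M ≥ 2, the complete k-partite graph K_{k×M} (vertices
Fin (k*M), parts given by division by M) satisfies
1 ≥ λ_{1,p}(K_{k×M}) ≥ (m - 2 + 2^{p-1})·k / (m·(k - 1 + 2^{p+2})) with m = kM. -/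
theorem stmt6 (k M : ℕ) (hk : 2 ≤ k) (hM : 2 ≤ M) (p : ℝ) (hp : 2 < p) :
    1 ≥ lambda1 p (fun e : {e : Fin (k * M) × Fin (k * M) //
        e.1 < e.2 ∧ (e.1 : ℕ) / M ≠ (e.2 : ℕ) / M} => e.val) ∧
    lambda1 p (fun e : {e : Fin (k * M) × Fin (k * M) //
        e.1 < e.2 ∧ (e.1 : ℕ) / M ≠ (e.2 : ℕ) / M} => e.val) ≥
      (((k * M : ℕ) : ℝ) - 2 + 2 ^ (p - 1)) * k /
        (((k * M : ℕ) : ℝ) * ((k : ℝ) - 1 + 2 ^ (p + 2))) := by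
  have hkR : (2:ℝ) ≤ k := by exact_mod_cast hk
  have hMR : (2:ℝ) ≤ M := by exact_mod_cast hM
  obtain ⟨x₀, hx₀, hle₀⟩ := test_fun k M hk hM p hp
  have low : ∀ r ∈ {r : ℝ | ∃ x : Fin (k*M) → ℝ, (∃ u v, x u ≠ x v) ∧
      r = graphEnergy p (fun e : {e : Fin (k * M) × Fin (k * M) //
        e.1 < e.2 ∧ (e.1 : ℕ) / M ≠ (e.2 : ℕ) / M} => e.val) x /
        graphDenom p (fun e : {e : Fin (k * M) × Fin (k * M) //
        e.1 < e.2 ∧ (e.1 : ℕ) / M ≠ (e.2 : ℕ) / M} => e.val) x},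
      (((k * M : ℕ) : ℝ) - 2 + 2 ^ (p - 1)) * k /
        (((k * M : ℕ) : ℝ) * ((k : ℝ) - 1 + 2 ^ (p + 2))) ≤ r := by
    rintro r ⟨x, hx, rfl⟩
    rw [le_div_iff₀ (denom_pos k M hk hM p hp x hx)]
    obtain ⟨c, hc⟩ := energy_lower k M hk hM p hp x hx
    refine le_trans (mul_le_mul_of_nonneg_left ?_ ?_) hc
    · unfold graphDenom
      refine csInf_le ⟨0, ?_⟩ ⟨c, ?_⟩
      · rintro t ⟨c, rfl⟩
        exact sum_nonneg fun u _ => mul_nonneg (Real.rpow_nonneg (abs_nonneg _) _) (Nat.cast_nonneg _)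
      · simp only [val_eq k M hM]
    · have h2 : (0:ℝ) ≤ 2 ^ (p-1) := by positivity
      have h3 : (0:ℝ) ≤ 2 ^ (p+2) := by positivity
      have h4 : (2:ℝ) ≤ ((k * M : ℕ) : ℝ) := by push_cast; nlinarith
      refine div_nonneg (mul_nonneg (by linarith) (by linarith))
        (mul_nonneg (by linarith) (by linarith))
  constructor
  · refine le_trans (csInf_le ⟨_, low⟩ ⟨x₀, hx₀, rfl⟩) ?_
    exact (div_le_one (denom_pos k M hk hM p hp x₀ hx₀)).2 hle₀
  · exact le_csInf ⟨_, x₀, hx₀, rfl⟩ low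
end
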